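/- arXiv:1702.00575 — 8 statements merged into one kernel-verified Lean document; each statement's English description precedes it below -/
import Mathlib

section
/- Let m ≥ 1, let ρ_0, …, ρ_{m−1} be qubit states, let S be their m×3 Bloch matrix, and let w ∈ ℝ^m. Then Tr[(Σ_x w_x ρ_x)₊], the sum of the positive eigenvalues of the Hermitian 2×2 matrix Σ_x w_x ρ_x, equals max(0, Σ_x w_x, ½ Σ_x w_x + ‖Sᵀw‖₂), where ‖·‖₂ denotes the Euclidean norm on ℝ³. -/
open Matrix Finset
open scoped ComplexOrder

/-- The Pauli matrices σ₁, σ₂, σ₃. -/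
noncomputable def pauli : Fin 3 → Matrix (Fin 2) (Fin 2) ℂ :=
  ![!![0, 1; 1, 0], !![0, -Complex.I; Complex.I, 0], !![1, 0; 0, -1]]

/-- for qubit states ρ_x with Bloch matrix S and w ∈ ℝ^m, the sum of
the positive eigenvalues of ∑_x w_x ρ_x equals
max(0, ∑_x w_x, ½ ∑_x w_x + ‖Sᵀw‖₂). -/
theorem stmt3 (m : ℕ) (hm : 1 ≤ m)
    (ρ : Fin m → Matrix (Fin 2) (Fin 2) ℂ)
    (hρ : ∀ x, (ρ x).PosSemidef ∧ (ρ x).trace = 1)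
    (S : Matrix (Fin m) (Fin 3) ℝ)
    (hS : ∀ x k, S x k = ((ρ x * pauli k).trace).re / 2)
    (w : Fin m → ℝ)
    (A : Matrix (Fin 2) (Fin 2) ℂ)
    (hAdef : A = ∑ x, (w x : ℂ) • ρ x)
    (hA : A.IsHermitian) :
    ∑ i, max (hA.eigenvalues i) 0 =
      max 0 (max (∑ x, w x)
        ((∑ x, w x) / 2 + Real.sqrt (∑ k, ((Sᵀ *ᵥ w) k) ^ 2))) := by
  have htr : ((∑ x, w x : ℝ) : ℂ) = A.trace := by
    rw [hAdef, Matrix.trace_sum]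
    simp [Matrix.trace_smul, (hρ _).2]
  have hv : ∀ k, (Sᵀ *ᵥ w) k = ((A * pauli k).trace).re / 2 := by
    intro k
    rw [hAdef, Finset.sum_mul, Matrix.trace_sum, Complex.re_sum, Finset.sum_div]
    simp only [Matrix.mulVec, dotProduct, Matrix.transpose_apply]
    refine Finset.sum_congr rfl fun x _ => ?_
    rw [hS, Matrix.smul_mul, Matrix.trace_smul, smul_eq_mul, Complex.re_ofReal_mul]
    ring
  have h1 := hA.trace_eq_sum_eigenvalues
  have h2 := hA.det_eq_prod_eigenvalues
  have h00 := hA.apply 0 0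
  have h11 := hA.apply 1 1
  have h01 := hA.apply 0 1
  rw [← htr] at h1
  rw [Matrix.trace_fin_two] at htr
  rw [Matrix.det_fin_two] at h2
  simp only [Fin.sum_univ_two, Fin.prod_univ_two] at h1 h2 ⊢
  have hsq : ∑ k, ((Sᵀ *ᵥ w) k) ^ 2
      = ((hA.eigenvalues 0 - hA.eigenvalues 1) / 2) ^ 2 := by
    simp only [Fin.sum_univ_three, hv]
    generalize hA.eigenvalues 0 = a at *
    generalize hA.eigenvalues 1 = b at *
    generalize (∑ x, w x) = t at *
    simp [Complex.ext_iff] at h1 h2 h00 h11 h01 htr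
    simp [pauli, Matrix.trace_fin_two, Matrix.mul_apply, Fin.sum_univ_two]
    obtain ⟨h01r, h01i⟩ := h01
    have e0 : (A 0 0).im = 0 := by linarith
    have e1 : (A 1 1).im = 0 := by linarith
    have e2 : (A 1 0).im = -(A 0 1).im := by linarith
    have hd := h2.1
    have ht := htr.1
    rw [e0, e1, e2, h01r] at hd
    rw [e2, h01r]
    have hab : (A 0 0).re + (A 1 1).re = a + b := by linarith
    linear_combination (1/4) * ((A 0 0).re + (A 1 1).re + a + b) * hab - hd
  have h1' : (∑ x, w x) = hA.eigenvalues 0 + hA.eigenvalues 1 := by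
    have h3 := congrArg Complex.re h1
    rw [Complex.ofReal_re] at h3
    rw [h3]
    simp
  rw [hsq, Real.sqrt_sq_eq_abs, h1']
  generalize hA.eigenvalues 0 = a
  generalize hA.eigenvalues 1 = b
  rcases abs_cases ((a - b) / 2) with h | h <;> rw [h.1] <;> grind
end

section
/- Let m, k ≥ 1, let S be an m×k real matrix, and let c ∈ ℝ^m. Then { p ∈ ℝ^m : ∀ w ∈ ℝ^m, ⟨p − c, w⟩ ≤ ‖Sᵀw‖₂ } = { c + S v : v ∈ ℝ^k, ‖v‖₂ ≤ 1 }, where ⟨·,·⟩ is the Euclidean inner product and ‖·‖₂ the Euclidean norm. (This identifies the set cut out by the family of supporting hyperplane inequalities p^T w ≤ W with the hyper-ellipsoid c + S·(closed unit ball).) -/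
open Matrix Finset

lemma adj_aux {m k : ℕ} (S : Matrix (Fin m) (Fin k) ℝ) (v : Fin k → ℝ) (w : Fin m → ℝ) :
    ∑ x, (S *ᵥ v) x * w x = ∑ j, v j * (Sᵀ *ᵥ w) j := by
  have h : (S *ᵥ v) ⬝ᵥ w = v ⬝ᵥ (Sᵀ *ᵥ w) := by
    rw [Matrix.mulVec_transpose, dotProduct_comm, Matrix.dotProduct_mulVec, dotProduct_comm]
  exact h

/-- the set of p ∈ ℝ^m satisfying ⟨p − c, w⟩ ≤ ‖Sᵀw‖₂ for every
direction w equals the hyper-ellipsoid c + S·(closed Euclidean unit ball). -/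
theorem stmt5 (m k : ℕ) (hm : 1 ≤ m) (hk : 1 ≤ k)
    (S : Matrix (Fin m) (Fin k) ℝ) (c : Fin m → ℝ) :
    {p : Fin m → ℝ | ∀ w : Fin m → ℝ,
        ∑ x, (p x - c x) * w x ≤ Real.sqrt (∑ j, ((Sᵀ *ᵥ w) j) ^ 2)} =
      {p : Fin m → ℝ | ∃ v : Fin k → ℝ,
        Real.sqrt (∑ j, v j ^ 2) ≤ 1 ∧ p = c + S *ᵥ v} := by
  ext p
  simp only [Set.mem_setOf_eq]
  constructor
  · intro h
    let L : EuclideanSpace ℝ (Fin k) →ₗ[ℝ] (Fin m → ℝ) :=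
      S.mulVecLin ∘ₗ (WithLp.linearEquiv 2 ℝ (Fin k → ℝ)).toLinearMap
    have hL : ∀ v : Fin k → ℝ, L (WithLp.toLp 2 v) = S *ᵥ v := fun v => rfl
    have hnorm : ∀ v : Fin k → ℝ, ‖(WithLp.toLp 2 v : EuclideanSpace ℝ (Fin k))‖ =
        Real.sqrt (∑ j, v j ^ 2) := by
      intro v
      simp [EuclideanSpace.norm_eq]
    have hcont : Continuous L := L.continuous_of_finiteDimensional
    by_cases hp : p - c ∈ L '' Metric.closedBall 0 1
    · obtain ⟨v, hv, hvp⟩ := hp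
      refine ⟨v.ofLp, ?_, ?_⟩
      · rw [← hnorm]
        simpa using hv
      · rw [← hL]
        simp [hvp]
    · exfalso
      obtain ⟨f, u, hf, hu⟩ := geometric_hahn_banach_closed_point
        ((convex_closedBall (0 : EuclideanSpace ℝ (Fin k)) 1).linear_image L)
        ((isCompact_closedBall (0 : EuclideanSpace ℝ (Fin k)) 1).image hcont).isClosed hp
      let w : Fin m → ℝ := fun x => f (Pi.single x 1)
      have hfw : ∀ q : Fin m → ℝ, f q = ∑ x, q x * w x := by
        intro q
        conv_lhs => rw [pi_eq_sum_univ' q]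
        rw [map_sum]
        refine Finset.sum_congr rfl fun x _ => ?_
        rw [map_smul, smul_eq_mul]
      have h1 := h w
      set r := Real.sqrt (∑ j, ((Sᵀ *ᵥ w) j) ^ 2) with hr
      have hr2 : r ^ 2 = ∑ j, ((Sᵀ *ᵥ w) j) ^ 2 :=
        Real.sq_sqrt (Finset.sum_nonneg fun _ _ => sq_nonneg _)
      have hr0 : 0 ≤ r := Real.sqrt_nonneg _
      have h2 := hf (L (WithLp.toLp 2 (r⁻¹ • (Sᵀ *ᵥ w)))) (Set.mem_image_of_mem _ (by
        rw [mem_closedBall_zero_iff, WithLp.toLp_smul, norm_smul, hnorm, ← hr,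
          Real.norm_of_nonneg (inv_nonneg.2 hr0)]
        exact inv_mul_le_one))
      rw [hL, hfw, adj_aux] at h2
      have h3 : ∑ j, (r⁻¹ • (Sᵀ *ᵥ w)) j * (Sᵀ *ᵥ w) j = r := by
        have : ∑ j, (r⁻¹ • (Sᵀ *ᵥ w)) j * (Sᵀ *ᵥ w) j = r⁻¹ * r ^ 2 := by
          rw [hr2, Finset.mul_sum]
          refine Finset.sum_congr rfl fun j _ => ?_
          simp only [Pi.smul_apply, smul_eq_mul]
          ring
        rw [this]
        by_cases h0 : r = 0
        · simp [h0]
        · field_simp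
      rw [hfw] at hu
      simp only [Pi.sub_apply] at hu
      linarith
  · rintro ⟨v, hv, rfl⟩ w
    have : ∑ x, ((c + S *ᵥ v) x - c x) * w x = ∑ x, (S *ᵥ v) x * w x := by
      simp
    rw [this, adj_aux]
    calc _ ≤ _ := Real.sum_mul_le_sqrt_mul_sqrt _ _ _
      _ ≤ 1 * _ := mul_le_mul_of_nonneg_right hv (Real.sqrt_nonneg _)
      _ = _ := one_mul _
end

section
/- Let m, k ≥ 1, let S be an m×k real matrix, let c ∈ ℝ^m, and set Q := S Sᵀ. For p ∈ ℝ^m, the following are equivalent: (i) there exists v ∈ ℝ^k with ‖v‖₂ ≤ 1 and p = c + S v; (ii) there exists z ∈ ℝ^m with Q z = p − c and ⟨p − c, z⟩ ≤ 1. (This is the pseudoinverse-free form of the hyper-ellipsoid system (I − Q⁻¹Q)(p − c) = 0, (p − c)ᵀ Q⁻¹ (p − c) ≤ 1, where Q⁻¹ is the Moore–Penrose pseudoinverse.) -/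
open Matrix Finset

theorem exists_normal_eq (m k : ℕ) (S : Matrix (Fin m) (Fin k) ℝ) (v : Fin k → ℝ) :
    ∃ z : Fin m → ℝ, (S * Sᵀ) *ᵥ z = S *ᵥ v := by
  have hle : LinearMap.range (S * Sᵀ).mulVecLin ≤ LinearMap.range S.mulVecLin := by
    rintro _ ⟨z, rfl⟩
    exact ⟨Sᵀ *ᵥ z, by simp only [Matrix.mulVecLin_apply, Matrix.mulVec_mulVec]⟩
  have heq := Submodule.eq_of_le_of_finrank_eq hle (Matrix.rank_self_mul_transpose S)
  have hv : S *ᵥ v ∈ LinearMap.range (S * Sᵀ).mulVecLin := by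
    rw [heq]
    exact ⟨v, rfl⟩
  obtain ⟨z, hz⟩ := hv
  exact ⟨z, hz⟩

/-- pseudoinverse-free form of the hyper-ellipsoid system.  With
Q = S Sᵀ, membership p ∈ c + S·(unit ball) is equivalent to the existence of
z with Q z = p − c and ⟨p − c, z⟩ ≤ 1. -/
theorem stmt6 (m k : ℕ) (hm : 1 ≤ m) (hk : 1 ≤ k)
    (S : Matrix (Fin m) (Fin k) ℝ) (c : Fin m → ℝ)
    (Q : Matrix (Fin m) (Fin m) ℝ) (hQ : Q = S * Sᵀ)
    (p : Fin m → ℝ) :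
    (∃ v : Fin k → ℝ, Real.sqrt (∑ j, v j ^ 2) ≤ 1 ∧ p = c + S *ᵥ v) ↔
      (∃ z : Fin m → ℝ, Q *ᵥ z = p - c ∧ ∑ x, (p x - c x) * z x ≤ 1) := by
  subst hQ
  have key : ∀ (v : Fin k → ℝ) (z : Fin m → ℝ), (S *ᵥ v) ⬝ᵥ z = v ⬝ᵥ (Sᵀ *ᵥ z) := by
    intro v z
    rw [Matrix.mulVec_transpose, dotProduct_comm, Matrix.dotProduct_mulVec, dotProduct_comm]
  have hsq : ∀ v : Fin k → ℝ, ∑ j, v j ^ 2 = v ⬝ᵥ v := by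
    intro v
    simp [dotProduct, sq]
  have hsum : ∀ z : Fin m → ℝ, ∑ x, (p x - c x) * z x = (p - c) ⬝ᵥ z := by
    intro z
    simp [dotProduct]
  simp only [hsq, hsum, Real.sqrt_le_iff, zero_le_one, true_and, one_pow]
  constructor
  · rintro ⟨v, hv, hp⟩
    obtain ⟨z, hz⟩ := exists_normal_eq m k S v
    have hpc : p - c = S *ᵥ v := by rw [hp]; simp
    refine ⟨z, by rw [hz, hpc], ?_⟩
    have h1 : (p - c) ⬝ᵥ z = v ⬝ᵥ (Sᵀ *ᵥ z) := by rw [hpc, key]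
    have h2 : (p - c) ⬝ᵥ z = (Sᵀ *ᵥ z) ⬝ᵥ (Sᵀ *ᵥ z) := by
      rw [hpc, ← hz, ← Matrix.mulVec_mulVec, key]
    have h3 : 0 ≤ (v - Sᵀ *ᵥ z) ⬝ᵥ (v - Sᵀ *ᵥ z) :=
      Finset.sum_nonneg fun i _ => mul_self_nonneg _
    rw [sub_dotProduct, dotProduct_sub, dotProduct_sub, dotProduct_comm (Sᵀ *ᵥ z) v] at h3
    linarith
  · rintro ⟨z, hz, hle⟩
    refine ⟨Sᵀ *ᵥ z, ?_, ?_⟩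
    · rw [← key, Matrix.mulVec_mulVec, hz]
      exact hle
    · rw [Matrix.mulVec_mulVec, hz]
      simp
end

section
/- Let m ≥ 1, let ρ_0, …, ρ_{m−1} be qubit states with m×3 Bloch matrix S, and let u ∈ ℝ^m be the all-ones vector. For every two-outcome POVM (π_0, π_1) on ℂ², the correlation vector p ∈ ℝ^m defined by p_x = Tr[ρ_x π_0] lies in the convex hull of the set {0, u} ∪ { ½u + S v : v ∈ ℝ³, ‖v‖₂ ≤ 1 }. (Forward direction of Proposition 2: S₂(ρ_x) ⊆ conv{0, u, hyper-ellipsoid}.) -/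
open Matrix Finset
open scoped ComplexOrder

/-- The Bloch radius of a positive semidefinite 2×2 matrix is at most half its trace. -/
theorem bloch_le (M : Matrix (Fin 2) (Fin 2) ℂ) (hM : M.PosSemidef) :
    Real.sqrt ((M 0 1).re ^ 2 + (M 0 1).im ^ 2 + (((M 0 0).re - (M 1 1).re) / 2) ^ 2)
      ≤ ((M 0 0).re + (M 1 1).re) / 2 := by
  have h0 := hM.diag_nonneg (i := 0)
  have h1 := hM.diag_nonneg (i := 1)
  have hd := hM.det_nonneg
  have h10 : M 1 0 = star (M 0 1) := (hM.isHermitian.apply 1 0).symm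
  rw [Matrix.det_fin_two, h10] at hd
  rw [Complex.le_def] at h0 h1 hd
  simp at h0 h1 hd
  apply Real.sqrt_le_iff.mpr
  constructor
  · linarith [h0.1, h1.1]
  · have := hd.1
    rw [← h0.2, ← h1.2] at this
    nlinarith

/-- forward direction of Proposition 2: any correlation vector
p_x = Tr[ρ_x π₀] generated by a two-outcome POVM lies in the convex hull of
{0, u} together with the hyper-ellipsoid ½u + S·(unit ball). -/
theorem stmt7 (m : ℕ) (hm : 1 ≤ m)
    (ρ : Fin m → Matrix (Fin 2) (Fin 2) ℂ)
    (hρ : ∀ x, (ρ x).PosSemidef ∧ (ρ x).trace = 1)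
    (S : Matrix (Fin m) (Fin 3) ℝ)
    (hS : ∀ x k, S x k = ((ρ x * pauli k).trace).re / 2)
    (u : Fin m → ℝ) (hu : u = fun _ => 1)
    (π₀ π₁ : Matrix (Fin 2) (Fin 2) ℂ)
    (hπ₀ : π₀.PosSemidef) (hπ₁ : π₁.PosSemidef) (hπ : π₀ + π₁ = 1)
    (p : Fin m → ℝ) (hp : ∀ x, p x = ((ρ x * π₀).trace).re) :
    p ∈ convexHull ℝ
      ({0, u} ∪ {q : Fin m → ℝ | ∃ v : Fin 3 → ℝ,
        Real.sqrt (∑ j, v j ^ 2) ≤ 1 ∧ q = (1 / 2 : ℝ) • u + S *ᵥ v}) := by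
  have hb0 := bloch_le π₀ hπ₀
  have hb1 := bloch_le π₁ hπ₁
  have e : π₁ = 1 - π₀ := eq_sub_of_add_eq' hπ
  have h10 : π₀ 1 0 = star (π₀ 0 1) := (hπ₀.isHermitian.apply 1 0).symm
  have i0 : (π₀ 0 0).im = 0 := by
    have := hπ₀.diag_nonneg (i := 0)
    rw [Complex.le_def] at this
    simpa using this.2.symm
  have i1 : (π₀ 1 1).im = 0 := by
    have := hπ₀.diag_nonneg (i := 1)
    rw [Complex.le_def] at this
    simpa using this.2.symm
  have hw : ((π₁ 0 1).re ^ 2 + (π₁ 0 1).im ^ 2 + (((π₁ 0 0).re - (π₁ 1 1).re) / 2) ^ 2)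
      = ((π₀ 0 1).re ^ 2 + (π₀ 0 1).im ^ 2 + (((π₀ 0 0).re - (π₀ 1 1).re) / 2) ^ 2) := by
    rw [e]; simp; ring
  have ha : ((π₁ 0 0).re + (π₁ 1 1).re) / 2 = 1 - ((π₀ 0 0).re + (π₀ 1 1).re) / 2 := by
    rw [e]; simp; ring
  rw [hw, ha] at hb1
  set W := ((π₀ 0 1).re ^ 2 + (π₀ 0 1).im ^ 2 + (((π₀ 0 0).re - (π₀ 1 1).re) / 2) ^ 2) with hW
  set r := Real.sqrt W with hr
  set a := ((π₀ 0 0).re + (π₀ 1 1).re) / 2 with ha'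
  have hWn : 0 ≤ W := by positivity
  have hr0 : 0 ≤ r := Real.sqrt_nonneg _
  have hrr : r ^ 2 = W := Real.sq_sqrt hWn
  let w : Fin 3 → ℝ := ![(π₀ 0 1).re, -(π₀ 0 1).im, ((π₀ 0 0).re - (π₀ 1 1).re) / 2]
  have hws : ∑ j, w j ^ 2 = W := by
    simp [w, Fin.sum_univ_three, hW]
  have hrw : ∀ j, r * (r⁻¹ * w j) = w j := by
    intro j
    by_cases h : r = 0
    · have h2 : ∑ j, w j ^ 2 = 0 := by rw [hws, ← hrr, h]; simp
      have h3 := (Finset.sum_eq_zero_iff_of_nonneg (fun i _ => sq_nonneg (w i))).1 h2 j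
        (Finset.mem_univ j)
      have h4 : w j = 0 := by simpa using h3
      simp [h4]
    · field_simp
  have hpx : ∀ x, p x = a + 2 * ∑ j, S x j * w j := by
    intro x
    have ht := (hρ x).2
    have hh : ρ x 1 0 = star (ρ x 0 1) := ((hρ x).1.isHermitian.apply 1 0).symm
    rw [Matrix.trace_fin_two] at ht
    have ht := congrArg Complex.re ht
    simp at ht
    have ht1 : (ρ x 1 1).re = 1 - (ρ x 0 0).re := by linarith
    rw [hp, Fin.sum_univ_three, hS, hS, hS]
    simp [pauli, w, Matrix.trace_fin_two, Matrix.mul_apply, Fin.sum_univ_two, h10, hh, i0, i1, ht1,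
      ha']
    ring
  have hconv := convex_convexHull ℝ ({0, u} ∪ {q : Fin m → ℝ | ∃ v : Fin 3 → ℝ,
        Real.sqrt (∑ j, v j ^ 2) ≤ 1 ∧ q = (1 / 2 : ℝ) • u + S *ᵥ v})
  have hsub := subset_convexHull ℝ ({0, u} ∪ {q : Fin m → ℝ | ∃ v : Fin 3 → ℝ,
        Real.sqrt (∑ j, v j ^ 2) ≤ 1 ∧ q = (1 / 2 : ℝ) • u + S *ᵥ v})
  let v : Fin 3 → ℝ := fun j => r⁻¹ * w j
  have hv : Real.sqrt (∑ j, v j ^ 2) ≤ 1 := by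
    refine Real.sqrt_le_iff.mpr ⟨zero_le_one, ?_⟩
    simp only [v, mul_pow]
    rw [← Finset.mul_sum, hws, ← hrr, ← mul_pow]
    by_cases h : r = 0
    · simp [h]
    · simp [h]
  have m0 := hsub (show (0 : Fin m → ℝ) ∈ _ from Or.inl (Or.inl rfl))
  have mu := hsub (show u ∈ _ from Or.inl (Or.inr rfl))
  have mv := hsub (show (1 / 2 : ℝ) • u + S *ᵥ v ∈ _ from Or.inr ⟨v, hv, rfl⟩)
  have key := hconv.sum_mem (t := Finset.univ) (w := ![1 - a - r, a - r, 2 * r])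
    (z := ![0, u, (1 / 2 : ℝ) • u + S *ᵥ v])
    (by intro i _; fin_cases i <;> simp <;> linarith)
    (by simp [Fin.sum_univ_three]; ring)
    (by intro i _; fin_cases i <;> [exact m0; exact mu; exact mv])
  convert key using 1
  funext x
  rw [hpx]
  have : ∑ j, S x j * w j = r * (S *ᵥ v) x := by
    simp only [Matrix.mulVec, dotProduct, Finset.mul_sum, v]
    refine Finset.sum_congr rfl fun j _ => ?_
    rw [mul_left_comm, hrw]
  rw [this, Fin.sum_univ_three]
  simp [hu]
  ring
end

section
/- Let m ≥ 1, let ρ_0, …, ρ_{m−1} be qubit states with m×3 Bloch matrix S, and let u ∈ ℝ^m be the all-ones vector. For every p in the convex hull of {0, u} ∪ { ½u + S v : v ∈ ℝ³, ‖v‖₂ ≤ 1 }, there exists a two-outcome POVM (π_0, π_1) on ℂ² such that Tr[ρ_x π_0] = p_x for all x. (Converse direction of Proposition 2: conv{0, u, hyper-ellipsoid} ⊆ S₂(ρ_x).) -/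
open Matrix Finset
open scoped ComplexOrder

theorem psd_aux (v : Fin 3 → ℝ) (hv : v 0 ^ 2 + v 1 ^ 2 + v 2 ^ 2 ≤ 1) :
    (!![((1 + v 2) / 2 : ℂ), ((v 0 : ℂ) - v 1 * Complex.I) / 2;
      ((v 0 : ℂ) + v 1 * Complex.I) / 2, ((1 - v 2) / 2 : ℂ)]).PosSemidef := by
  apply Matrix.PosSemidef.of_dotProduct_mulVec_nonneg
  · ext i j
    fin_cases i <;> fin_cases j <;> simp [Matrix.conjTranspose_apply, Complex.ext_iff]
  · intro x
    have key : ∀ a b c d : ℝ, 0 ≤ (a^2+b^2+c^2+d^2) + (v 0 * (2*(a*c+b*d)) + v 1 * (2*(a*d-b*c))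
        + v 2 * (a^2+b^2-c^2-d^2)) := by
      intro a b c d
      have h0 : 0 ≤ a^2+b^2+c^2+d^2 := by positivity
      have hs : (2*(a*c+b*d))^2 + (2*(a*d-b*c))^2 + (a^2+b^2-c^2-d^2)^2
          = (a^2+b^2+c^2+d^2)^2 := by ring
      generalize 2*(a*c+b*d) = s at *
      generalize 2*(a*d-b*c) = t at *
      generalize a^2+b^2-c^2-d^2 = w at *
      generalize a^2+b^2+c^2+d^2 = n at *
      have h1 : (v 0 * s + v 1 * t + v 2 * w)^2 ≤ n^2 := by
        nlinarith [sq_nonneg (v 0 * t - v 1 * s), sq_nonneg (v 0 * w - v 2 * s),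
          sq_nonneg (v 1 * w - v 2 * t), mul_le_mul_of_nonneg_right hv (sq_nonneg n)]
      have := abs_le_of_sq_le_sq' h1 h0
      linarith [this.1]
    have k := key (x 0).re (x 0).im (x 1).re (x 1).im
    rw [Complex.nonneg_iff]
    constructor
    · simp [dotProduct, Matrix.mulVec, Fin.sum_univ_two]
      nlinarith [k]
    · simp [dotProduct, Matrix.mulVec, Fin.sum_univ_two]
      ring

theorem convexity_aux (m : ℕ) (ρ : Fin m → Matrix (Fin 2) (Fin 2) ℂ) :
    Convex ℝ {p : Fin m → ℝ | ∃ π₀ π₁ : Matrix (Fin 2) (Fin 2) ℂ,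
      π₀.PosSemidef ∧ π₁.PosSemidef ∧ π₀ + π₁ = 1 ∧
      ∀ x, ((ρ x * π₀).trace).re = p x} := by
  rintro p ⟨A, B, hA, hB, hAB, hp⟩ q ⟨C, D, hC, hD, hCD, hq⟩ a b ha hb hab
  have ha' : (0 : ℂ) ≤ (a : ℂ) := by exact_mod_cast ha
  have hb' : (0 : ℂ) ≤ (b : ℂ) := by exact_mod_cast hb
  refine ⟨(a : ℂ) • A + (b : ℂ) • C, (a : ℂ) • B + (b : ℂ) • D,
    (hA.smul ha').add (hC.smul hb'), (hB.smul ha').add (hD.smul hb'), ?_, ?_⟩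
  · have : (a : ℂ) • A + (b : ℂ) • C + ((a : ℂ) • B + (b : ℂ) • D)
        = (a : ℂ) • (A + B) + (b : ℂ) • (C + D) := by
      rw [smul_add, smul_add]; abel
    rw [this, hAB, hCD, ← add_smul, ← Complex.ofReal_add, hab]
    simp
  · intro x
    simp [Matrix.mul_add, hp, hq]

/-- converse direction of Proposition 2: every p in the convex hull
of {0, u} and the hyper-ellipsoid ½u + S·(unit ball) is the correlation vector
p_x = Tr[ρ_x π₀] of some two-outcome POVM (π₀, π₁). -/
theorem stmt8 (m : ℕ) (hm : 1 ≤ m)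
    (ρ : Fin m → Matrix (Fin 2) (Fin 2) ℂ)
    (hρ : ∀ x, (ρ x).PosSemidef ∧ (ρ x).trace = 1)
    (S : Matrix (Fin m) (Fin 3) ℝ)
    (hS : ∀ x k, S x k = ((ρ x * pauli k).trace).re / 2)
    (u : Fin m → ℝ) (hu : u = fun _ => 1)
    (p : Fin m → ℝ)
    (hp : p ∈ convexHull ℝ
      ({0, u} ∪ {q : Fin m → ℝ | ∃ v : Fin 3 → ℝ,
        Real.sqrt (∑ j, v j ^ 2) ≤ 1 ∧ q = (1 / 2 : ℝ) • u + S *ᵥ v})) :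
    ∃ π₀ π₁ : Matrix (Fin 2) (Fin 2) ℂ,
      π₀.PosSemidef ∧ π₁.PosSemidef ∧ π₀ + π₁ = 1 ∧
      ∀ x, ((ρ x * π₀).trace).re = p x := by
  subst hu
  refine convexHull_min ?_ (convexity_aux m ρ) hp
  rintro q ((rfl | rfl) | ⟨v, hv, rfl⟩)
  · exact ⟨0, 1, Matrix.PosSemidef.zero, Matrix.PosSemidef.one, by simp, by simp⟩
  · exact ⟨1, 0, Matrix.PosSemidef.one, Matrix.PosSemidef.zero, by simp, by simp [hρ]⟩
  · have hv' : v 0 ^ 2 + v 1 ^ 2 + v 2 ^ 2 ≤ 1 := by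
      rw [Real.sqrt_le_left zero_le_one, Fin.sum_univ_three, one_pow] at hv
      exact hv
    refine ⟨_, _, psd_aux v hv', psd_aux (-v) (by simpa using hv'), ?_, ?_⟩
    · ext i j
      fin_cases i <;> fin_cases j <;> simp <;> ring
    · intro x
      have ht := congrArg Complex.re (hρ x).2
      simp [Matrix.trace, Fin.sum_univ_two] at ht
      simp [Matrix.mulVec, dotProduct, Fin.sum_univ_three, hS, pauli, Matrix.trace,
        Fin.sum_univ_two, Matrix.mul_apply]
      linear_combination (1/2) * ht
end

section
/- Let m ≥ 1, let ρ_0, …, ρ_{m−1} be qubit states with m×3 Bloch matrix S, let Q := S Sᵀ, and let l be the dimension of the ℝ-linear span of {ρ_0, …, ρ_{m−1}} inside the real vector space of Hermitian 2×2 complex matrices. Then the rank of Q equals l − 1 if the identity matrix I lies in that span, and equals l otherwise. -/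
open Matrix Finset
open scoped ComplexOrder

open Matrix Finset
open scoped ComplexOrder

/-- The Bloch vector as a real-linear map. -/
noncomputable def blochMap : Matrix (Fin 2) (Fin 2) ℂ →ₗ[ℝ] (Fin 3 → ℝ) where
  toFun M k := ((M * pauli k).trace).re / 2
  map_add' A B := by
    ext k
    simp [Matrix.add_mul, Matrix.trace_add, add_div]
  map_smul' c A := by
    ext k
    simp [Matrix.smul_mul, Matrix.trace_smul, mul_div_assoc]

lemma blochMap_one : blochMap 1 = 0 := by
  ext k
  fin_cases k <;> simp [blochMap, pauli, Matrix.trace_fin_two]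

lemma eq_smul_of_blochMap (M : Matrix (Fin 2) (Fin 2) ℂ) (hM : M.IsHermitian)
    (h : blochMap M = 0) : M = (M 0 0).re • (1 : Matrix (Fin 2) (Fin 2) ℂ) := by
  have h0 := congrFun h 0
  have h1 := congrFun h 1
  have h2 := congrFun h 2
  have e00 := hM.apply 0 0
  have e01 := hM.apply 0 1
  have e11 := hM.apply 1 1
  simp [blochMap, pauli, Matrix.trace_fin_two, Matrix.mul_apply, Fin.sum_univ_two] at h0 h1 h2
  simp [Complex.ext_iff] at e00 e01 e11
  obtain ⟨a, b⟩ := e01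
  ext i j
  fin_cases i <;> fin_cases j <;> simp [Complex.ext_iff] <;> (try constructor) <;> linarith

lemma rank_eq_map (m : ℕ) (ρ : Fin m → Matrix (Fin 2) (Fin 2) ℂ)
    (S : Matrix (Fin m) (Fin 3) ℝ)
    (hS : ∀ x k, S x k = ((ρ x * pauli k).trace).re / 2) :
    (S * Sᵀ).rank =
      Module.finrank ℝ ((Submodule.span ℝ (Set.range ρ)).map blochMap) := by
  rw [Matrix.rank_self_mul_transpose, Matrix.rank_eq_finrank_span_row, Submodule.map_span,
    ← Set.range_comp]
  have : S.row = blochMap ∘ ρ := by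
    ext x k
    exact hS x k
  rw [this]

/-- with Q = S Sᵀ and l the dimension of the ℝ-linear span of the
qubit states ρ_0, …, ρ_{m−1} (inside the Hermitian 2×2 matrices, i.e. their real
span in the matrix space), rank Q = l − 1 if the identity lies in the span, and
rank Q = l otherwise. -/
theorem stmt9 (m : ℕ) (hm : 1 ≤ m)
    (ρ : Fin m → Matrix (Fin 2) (Fin 2) ℂ)
    (hρ : ∀ x, (ρ x).PosSemidef ∧ (ρ x).trace = 1)
    (S : Matrix (Fin m) (Fin 3) ℝ)
    (hS : ∀ x k, S x k = ((ρ x * pauli k).trace).re / 2)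
    (Q : Matrix (Fin m) (Fin m) ℝ) (hQ : Q = S * Sᵀ)
    (l : ℕ)
    (hl : l = Module.finrank ℝ (Submodule.span ℝ (Set.range ρ))) :
    ((1 : Matrix (Fin 2) (Fin 2) ℂ) ∈ Submodule.span ℝ (Set.range ρ) → Q.rank = l - 1) ∧
    ((1 : Matrix (Fin 2) (Fin 2) ℂ) ∉ Submodule.span ℝ (Set.range ρ) → Q.rank = l) := by
  subst hQ hl
  rw [rank_eq_map m ρ S hS]
  set V := Submodule.span ℝ (Set.range ρ) with hV
  have hH : ∀ M ∈ V, M.IsHermitian := by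
    intro M hM
    have : V ≤ selfAdjoint.submodule ℝ (Matrix (Fin 2) (Fin 2) ℂ) := by
      rw [hV, Submodule.span_le]
      rintro _ ⟨x, rfl⟩
      exact (hρ x).1.isHermitian
    exact this hM
  have key := LinearMap.finrank_range_add_finrank_ker (blochMap.domRestrict V)
  rw [LinearMap.range_domRestrict] at key
  constructor
  · intro h1
    have : Module.finrank ℝ (LinearMap.ker (blochMap.domRestrict V)) = 1 := by
      have hk : LinearMap.ker (blochMap.domRestrict V) = Submodule.span ℝ {(⟨1, h1⟩ : V)} := by
        apply le_antisymm
        · rintro ⟨M, hM⟩ hk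
          rw [Submodule.mem_span_singleton]
          exact ⟨(M 0 0).re, Subtype.ext (eq_smul_of_blochMap M (hH M hM) hk).symm⟩
        · rw [Submodule.span_singleton_le_iff_mem]
          exact blochMap_one
      rw [hk, finrank_span_singleton]
      intro h
      exact one_ne_zero (congrArg Subtype.val h)
    omega
  · intro h1
    have hk : LinearMap.ker (blochMap.domRestrict V) = ⊥ := by
      rw [eq_bot_iff]
      rintro ⟨M, hM⟩ hk
      have e := eq_smul_of_blochMap M (hH M hM) hk
      by_cases hc : (M 0 0).re = 0
      · rw [hc, zero_smul] at e
        exact Subtype.ext e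
      · exfalso
        apply h1
        rw [e] at hM
        exact (Submodule.smul_mem_iff V hc).1 hM
    rw [hk, finrank_bot] at key
    omega
end

section
/- Let α ∈ (0, π), and let ρ_0 = |ψ_0⟩⟨ψ_0| and ρ_1 = |ψ_1⟩⟨ψ_1| be the qubit pure states with ψ_0 = (1,0)ᵀ and ψ_1 = (cos(α/2), sin(α/2))ᵀ. Then the set { (Tr[ρ_0 π_0], Tr[ρ_1 π_0]) ∈ ℝ² : (π_0, π_1) a two-outcome POVM on ℂ² } equals the convex hull of { (0,0), (1,1) } ∪ { (p_0, p_1) ∈ ℝ² : (p_0 + p_1 − 1)²/(1 + cos α) + (p_0 − p_1)²/(1 − cos α) ≤ ½ }. -/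
open Matrix Finset
open scoped ComplexOrder

lemma quad_nonneg_aux (p w r a c : ℝ) (hp : 0 ≤ p) (hr : 0 ≤ r) (h : w ^ 2 ≤ p * r) :
    0 ≤ p * a ^ 2 + 2 * w * a * c + r * c ^ 2 := by
  rcases hp.eq_or_lt with h0 | h0
  · subst h0
    have : w = 0 := by nlinarith [sq_nonneg w]
    subst this
    nlinarith [mul_nonneg hr (sq_nonneg c)]
  · have : 0 ≤ p * (p * a ^ 2 + 2 * w * a * c + r * c ^ 2) := by
      nlinarith [sq_nonneg (p * a + w * c), mul_nonneg (sub_nonneg.2 h) (sq_nonneg c)]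
    exact nonneg_of_mul_nonneg_right this h0

lemma psd_aux_s10 (p w r : ℝ) (hp : 0 ≤ p) (hr : 0 ≤ r) (h : w ^ 2 ≤ p * r) :
    (!![(p : ℂ), (w : ℂ); (w : ℂ), (r : ℂ)]).PosSemidef := by
  apply Matrix.PosSemidef.of_dotProduct_mulVec_nonneg
  · ext i j
    fin_cases i <;> fin_cases j <;> simp [Matrix.conjTranspose_apply]
  · intro x
    rw [Complex.nonneg_iff]
    have h1 := quad_nonneg_aux p w r (x 0).re (x 1).re hp hr h
    have h2 := quad_nonneg_aux p w r (x 0).im (x 1).im hp hr h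
    constructor
    · simp [Matrix.mulVec, dotProduct, Fin.sum_univ_two]
      nlinarith
    · simp [Matrix.mulVec, dotProduct, Fin.sum_univ_two]
      ring

lemma psd_conv (M : Matrix (Fin 2) (Fin 2) ℂ) (h : M.PosSemidef) :
    0 ≤ (M 0 0).re ∧ 0 ≤ (M 1 1).re ∧ (M 1 0).re = (M 0 1).re ∧ (M 1 0).im = - (M 0 1).im ∧
    (M 0 1).re ^ 2 + (M 0 1).im ^ 2 ≤ (M 0 0).re * (M 1 1).re := by
  have a := (Complex.nonneg_iff.1 (h.diag_nonneg (i := 0)))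
  have b := (Complex.nonneg_iff.1 (h.diag_nonneg (i := 1)))
  have c := h.isHermitian.apply 0 1
  have c1 := congrArg Complex.re c
  have c2 := congrArg Complex.im c
  simp at c1 c2
  have d := (Complex.nonneg_iff.1 h.det_nonneg).1
  rw [Matrix.det_fin_two] at d
  simp only [Complex.sub_re, Complex.mul_re] at d
  refine ⟨a.1, b.1, c1, by linarith, ?_⟩
  rw [← a.2, ← b.2, c1, ← c2] at d
  rw [← c2]
  nlinarith

lemma tr_aux (c s : ℝ) (M : Matrix (Fin 2) (Fin 2) ℂ) (hM : (M 1 0).re = (M 0 1).re) :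
    ((Matrix.vecMulVec ![(c : ℂ), (s : ℂ)] (star ![(c : ℂ), (s : ℂ)]) * M).trace).re =
      c ^ 2 * (M 0 0).re + 2 * c * s * (M 0 1).re + s ^ 2 * (M 1 1).re := by
  simp only [Matrix.trace, Matrix.diag_apply, Matrix.mul_apply, Fin.sum_univ_two, Matrix.vecMulVec_apply]
  simp [hM]
  ring

lemma dir_aux (A B d : ℝ) (hd : 0 ≤ d) (h : A ^ 2 + B ^ 2 ≤ d ^ 2) :
    ∃ u v : ℝ, d * u = A ∧ d * v = B ∧ u ^ 2 + v ^ 2 ≤ 1 := by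
  rcases hd.eq_or_lt with h0 | h0
  · subst h0
    refine ⟨0, 0, ?_, ?_, by norm_num⟩ <;> nlinarith [sq_nonneg A, sq_nonneg B]
  · refine ⟨A / d, B / d, by field_simp, by field_simp, ?_⟩
    rw [div_pow, div_pow, ← add_div, div_le_one (by positivity)]
    exact h

/-- for α ∈ (0, π) and the pure states ρ₀ = |ψ₀⟩⟨ψ₀|,
ρ₁ = |ψ₁⟩⟨ψ₁| with ψ₀ = (1,0)ᵀ, ψ₁ = (cos(α/2), sin(α/2))ᵀ, the set of
correlation pairs (Tr[ρ₀π₀], Tr[ρ₁π₀]) over all two-outcome POVMs equals the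
convex hull of {(0,0), (1,1)} and the ellipse
(p₀+p₁−1)²/(1+cos α) + (p₀−p₁)²/(1−cos α) ≤ ½. -/
theorem stmt10 (α : ℝ) (hα : α ∈ Set.Ioo 0 Real.pi)
    (ψ₀ ψ₁ : Fin 2 → ℂ)
    (hψ₀ : ψ₀ = ![1, 0])
    (hψ₁ : ψ₁ = ![(Real.cos (α / 2) : ℂ), (Real.sin (α / 2) : ℂ)])
    (ρ₀ ρ₁ : Matrix (Fin 2) (Fin 2) ℂ)
    (hρ₀ : ρ₀ = Matrix.vecMulVec ψ₀ (star ψ₀))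
    (hρ₁ : ρ₁ = Matrix.vecMulVec ψ₁ (star ψ₁)) :
    {q : ℝ × ℝ | ∃ π₀ π₁ : Matrix (Fin 2) (Fin 2) ℂ,
        π₀.PosSemidef ∧ π₁.PosSemidef ∧ π₀ + π₁ = 1 ∧
        q = (((ρ₀ * π₀).trace).re, ((ρ₁ * π₀).trace).re)} =
      convexHull ℝ
        ({((0 : ℝ), (0 : ℝ)), ((1 : ℝ), (1 : ℝ))} ∪
          {q : ℝ × ℝ |
            (q.1 + q.2 - 1) ^ 2 / (1 + Real.cos α) +
              (q.1 - q.2) ^ 2 / (1 - Real.cos α) ≤ 1 / 2}) := by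
  have hc0 : 0 < Real.cos (α / 2) := Real.cos_pos_of_mem_Ioo ⟨by linarith [hα.1, Real.pi_pos], by linarith [hα.2]⟩
  have hs0 : 0 < Real.sin (α / 2) := Real.sin_pos_of_pos_of_lt_pi (by linarith [hα.1]) (by linarith [hα.2, Real.pi_pos])
  have hcs := Real.sin_sq_add_cos_sq (α / 2)
  have hca : Real.cos α = 2 * Real.cos (α / 2) ^ 2 - 1 := by
    rw [← Real.cos_two_mul]; congr 1; ring
  have h0 : ψ₀ = ![((1 : ℝ) : ℂ), ((0 : ℝ) : ℂ)] := by rw [hψ₀]; simp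
  rw [hρ₀, hρ₁, hψ₁, h0, hca]
  clear hρ₀ hρ₁ hψ₁ h0 hψ₀ hca
  generalize Real.cos (α / 2) = c at *
  generalize Real.sin (α / 2) = s at *
  have e1 : 1 + (2 * c ^ 2 - 1) = 2 * c ^ 2 := by ring
  have e2 : 1 - (2 * c ^ 2 - 1) = 2 * s ^ 2 := by linarith
  rw [e1, e2]
  apply Set.Subset.antisymm
  · rintro q ⟨P, Q, hP, hQ, hPQ, rfl⟩
    obtain ⟨a1, a2, a3, a4, a5⟩ := psd_conv P hP
    obtain ⟨b1, b2, b3, b4, b5⟩ := psd_conv Q hQ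
    have hQe : Q = 1 - P := by rw [← hPQ]; simp
    subst hQe
    rw [tr_aux _ _ P a3, tr_aux _ _ P a3]
    simp at b1 b2 b5
    generalize (P 0 0).re = p at *
    generalize (P 1 1).re = r at *
    generalize (P 0 1).re = w at *
    generalize (P 0 1).im = z at *
    set d := Real.sqrt (((p - r) / 2) ^ 2 + (w ^ 2 + z ^ 2)) with hd
    have hd0 : 0 ≤ d := Real.sqrt_nonneg _
    have hd2 : d ^ 2 = ((p - r) / 2) ^ 2 + (w ^ 2 + z ^ 2) := Real.sq_sqrt (by positivity)
    have hl1 : d ≤ (p + r) / 2 := abs_le_of_sq_le_sq' (by nlinarith) (by linarith) |>.2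
    have hl2 : d ≤ 1 - (p + r) / 2 := abs_le_of_sq_le_sq' (by nlinarith) (by linarith) |>.2
    clear_value d
    obtain ⟨u, v, hu, hv, huv⟩ := dir_aux ((p - r) / 2) w d hd0 (by nlinarith [sq_nonneg z])
    set S : Set (ℝ × ℝ) := {((0 : ℝ), (0 : ℝ)), ((1 : ℝ), (1 : ℝ))} ∪
          {q : ℝ × ℝ |
            (q.1 + q.2 - 1) ^ 2 / (2 * c ^ 2) +
              (q.1 - q.2) ^ 2 / (2 * s ^ 2) ≤ 1 / 2} with hS
    have m0 : ((0 : ℝ), (0 : ℝ)) ∈ S := by simp [hS]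
    have m1 : ((1 : ℝ), (1 : ℝ)) ∈ S := by simp [hS]
    have m2 : ((1 + u) / 2, (1 + u * (c ^ 2 - s ^ 2) + v * (2 * s * c)) / 2) ∈ S := by
      right
      have f1 : (1 + u) / 2 + (1 + u * (c ^ 2 - s ^ 2) + v * (2 * s * c)) / 2 - 1 = c * (u * c + v * s) := by
        linear_combination (-u / 2) * hcs
      have f2 : (1 + u) / 2 - (1 + u * (c ^ 2 - s ^ 2) + v * (2 * s * c)) / 2 = s * (u * s - v * c) := by
        linear_combination (-u / 2) * hcs
      simp only [Set.mem_ofPred_eq]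
      rw [f1, f2]
      have : (c * (u * c + v * s)) ^ 2 / (2 * c ^ 2) + (s * (u * s - v * c)) ^ 2 / (2 * s ^ 2)
          = (u ^ 2 + v ^ 2) * (s ^ 2 + c ^ 2) / 2 := by
        field_simp
        ring
      rw [this, hcs]
      linarith
    have key := (convex_convexHull ℝ S).sum_mem (t := Finset.univ)
      (w := ![1 - (p + r) / 2 - d, (p + r) / 2 - d, 2 * d])
      (z := ![((0 : ℝ), (0 : ℝ)), ((1 : ℝ), (1 : ℝ)),
        ((1 + u) / 2, (1 + u * (c ^ 2 - s ^ 2) + v * (2 * s * c)) / 2)])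
      (by intro i _; fin_cases i <;> simp <;> linarith)
      (by simp [Fin.sum_univ_three]; ring)
      (by intro i _
          fin_cases i
          · exact subset_convexHull ℝ S m0
          · exact subset_convexHull ℝ S m1
          · exact subset_convexHull ℝ S m2)
    convert key using 1
    simp only [Fin.sum_univ_three]
    ext
    · simp
      linear_combination -hu
    · simp
      linear_combination -(c ^ 2 - s ^ 2) * hu - 2 * s * c * hv + (p + r) / 2 * hcs
  · apply convexHull_min
    · rintro ⟨x, y⟩ (h | h)
      · rcases h with h | h
        · refine ⟨0, 1, Matrix.PosSemidef.zero, Matrix.PosSemidef.one, by simp, ?_⟩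
          rw [h, tr_aux _ _ _ (by simp), tr_aux _ _ _ (by simp)]; simp
        · refine ⟨1, 0, Matrix.PosSemidef.one, Matrix.PosSemidef.zero, by simp, ?_⟩
          rw [h, tr_aux _ _ _ (by simp), tr_aux _ _ _ (by simp)]
          simp
          linarith
      · simp only [Set.mem_ofPred_eq] at h
        obtain ⟨a, ha⟩ : ∃ a, x + y - 1 = c * a := ⟨(x + y - 1) / c, by field_simp⟩
        obtain ⟨b, hb⟩ : ∃ b, x - y = s * b := ⟨(x - y) / s, by field_simp⟩
        have hab : a ^ 2 + b ^ 2 ≤ 1 := by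
          rw [ha, hb] at h
          have : (c * a) ^ 2 / (2 * c ^ 2) + (s * b) ^ 2 / (2 * s ^ 2) = (a ^ 2 + b ^ 2) / 2 := by
            field_simp
          linarith
        have hx : x = (1 + (a * c + b * s)) / 2 := by linarith
        have hy : y = (1 + (a * c - b * s)) / 2 := by linarith
        have hn : (a * c + b * s) ^ 2 + (a * s - b * c) ^ 2 ≤ 1 := by
          have : (a * c + b * s) ^ 2 + (a * s - b * c) ^ 2 = (a ^ 2 + b ^ 2) * (s ^ 2 + c ^ 2) := by ring
          rw [this, hcs]; linarith
        have hm : -1 ≤ a * c + b * s ∧ a * c + b * s ≤ 1 := by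
          constructor <;> nlinarith [sq_nonneg (a * s - b * c)]
        refine ⟨_, _, psd_aux_s10 ((1 + (a * c + b * s)) / 2) ((a * s - b * c) / 2) ((1 - (a * c + b * s)) / 2)
          (by linarith [hm.1]) (by linarith [hm.2]) (by nlinarith),
          psd_aux_s10 ((1 - (a * c + b * s)) / 2) (-((a * s - b * c) / 2)) ((1 + (a * c + b * s)) / 2)
          (by linarith [hm.2]) (by linarith [hm.1]) (by nlinarith), ?_, ?_⟩
        · ext i j
          fin_cases i <;> fin_cases j <;> simp <;> ring
        · rw [tr_aux _ _ _ (by simp), tr_aux _ _ _ (by simp)]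
          simp only [Matrix.of_apply, Matrix.cons_val', Matrix.cons_val_zero, Matrix.cons_val_one, Matrix.cons_val_fin_one, Complex.ofReal_re]
          ext
          · simp only []
            rw [hx]; ring
          · simp only []
            rw [hy]
            linear_combination (-(1 + a * c - b * s) / 2) * hcs
    · rintro _ ⟨P, Q, hP, hQ, hPQ, rfl⟩ _ ⟨P', Q', hP', hQ', hPQ', rfl⟩ k l hk hl hkl
      have hk' : (0 : ℂ) ≤ (k : ℂ) := by exact_mod_cast hk
      have hl' : (0 : ℂ) ≤ (l : ℂ) := by exact_mod_cast hl
      refine ⟨(k : ℂ) • P + (l : ℂ) • P', (k : ℂ) • Q + (l : ℂ) • Q',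
        (hP.smul hk').add (hP'.smul hl'), (hQ.smul hk').add (hQ'.smul hl'), ?_, ?_⟩
      · have : (k : ℂ) • P + (l : ℂ) • P' + ((k : ℂ) • Q + (l : ℂ) • Q') =
            (k : ℂ) • (P + Q) + (l : ℂ) • (P' + Q') := by
          simp only [smul_add]; abel
        rw [this, hPQ, hPQ', ← add_smul]
        have : (k : ℂ) + l = 1 := by exact_mod_cast hkl
        rw [this, one_smul]
      · simp only [Matrix.mul_add, Matrix.mul_smul, Matrix.trace_add, Matrix.trace_smul,
          Complex.add_re, smul_eq_mul, Complex.re_ofReal_mul, Prod.smul_mk, Prod.mk_add_mk]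
end

section
/- Let m ≥ 3, and for x ∈ {0, …, m−1} let ρ_x = |φ_x⟩⟨φ_x| be the qubit pure state with φ_x = (cos(πx/m), sin(πx/m))ᵀ. Then the set { p ∈ ℝ^m : p_x = Tr[ρ_x π_0] for some two-outcome POVM (π_0, π_1) on ℂ² } equals the convex hull of {0, u} ∪ E, where u ∈ ℝ^m is the all-ones vector, 0 the zero vector, and E := { p ∈ ℝ^m : ∃ a, b ∈ ℝ with a² + b² ≤ 1 and p_x = ½ + ½( a cos(2πx/m) + b sin(2πx/m) ) for all x }. -/
open Matrix Finset
open scoped ComplexOrder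

lemma aux_psd (a b : ℝ) (h : a ^ 2 + b ^ 2 ≤ 1) :
    (!![(((1 + a) / 2 : ℝ) : ℂ), ((b / 2 : ℝ) : ℂ); ((b / 2 : ℝ) : ℂ), (((1 - a) / 2 : ℝ) : ℂ)]).PosSemidef := by
  set M := !![(((1 + a) / 2 : ℝ) : ℂ), ((b / 2 : ℝ) : ℂ); ((b / 2 : ℝ) : ℂ), (((1 - a) / 2 : ℝ) : ℂ)] with hM
  have key : M = Mᴴ * M + (((1 - a ^ 2 - b ^ 2) / 4 : ℝ) : ℂ) • (1 : Matrix (Fin 2) (Fin 2) ℂ) := by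
    have h2 : (starRingEnd ℂ) 2 = 2 := Complex.conj_ofNat 2
    ext i j
    fin_cases i <;> fin_cases j <;>
      simp [h2, hM, Matrix.mul_apply, Fin.sum_univ_two, Complex.conj_ofReal] <;> ring
  rw [key]
  refine (Matrix.posSemidef_conjTranspose_mul_self M).add (Matrix.PosSemidef.one.smul ?_)
  exact_mod_cast (by linarith : (0:ℝ) ≤ (1 - a ^ 2 - b ^ 2) / 4)

lemma aux_trace (t : ℝ) (M : Matrix (Fin 2) (Fin 2) ℂ) (hM : M.IsHermitian) :
    ((Matrix.vecMulVec ![(Real.cos t : ℂ), (Real.sin t : ℂ)]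
      (star ![(Real.cos t : ℂ), (Real.sin t : ℂ)]) * M).trace).re =
    ((M 0 0).re + (M 1 1).re) / 2 + (((M 0 0).re - (M 1 1).re) / 2 * Real.cos (2 * t)
      + (M 0 1).re * Real.sin (2 * t)) := by
  have h10 : (M 1 0).re = (M 0 1).re := by
    rw [← hM.apply 0 1]; simp
  rw [Real.cos_two_mul, Real.sin_two_mul]
  have hs := Real.sin_sq_add_cos_sq t
  simp only [Matrix.trace, Matrix.diag, Matrix.mul_apply, Fin.sum_univ_two, Matrix.vecMulVec_apply,
    Matrix.cons_val_zero, Matrix.cons_val_one, Pi.star_apply, Complex.star_def,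
    Complex.conj_ofReal, ← Complex.ofReal_mul, Complex.add_re, Complex.re_ofReal_mul, h10]
  linear_combination (M 1 1).re * hs

lemma aux_bound (M : Matrix (Fin 2) (Fin 2) ℂ) (hM : M.PosSemidef) :
    0 ≤ (M 0 0).re + (M 1 1).re ∧ (((M 0 0).re - (M 1 1).re) / 2) ^ 2 + (M 0 1).re ^ 2 ≤
      (((M 0 0).re + (M 1 1).re) / 2) ^ 2 := by
  have h0 := (Complex.le_def.1 (hM.diag_nonneg (i := 0)))
  have h1 := (Complex.le_def.1 (hM.diag_nonneg (i := 1)))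
  have hd := (Complex.le_def.1 hM.det_nonneg).1
  rw [Matrix.det_fin_two, ← hM.1.apply 1 0] at hd
  simp at h0 h1 hd
  refine ⟨by linarith, ?_⟩
  rw [← h0.2, ← h1.2] at hd
  nlinarith [sq_nonneg (M 0 1).im]

lemma aux_div (A B t : ℝ) (h0 : 0 ≤ t) (h : A ^ 2 + B ^ 2 ≤ t ^ 2) :
    ∃ a b : ℝ, a ^ 2 + b ^ 2 ≤ 1 ∧ A = t * a ∧ B = t * b := by
  rcases h0.eq_or_lt with rfl | h0
  · exact ⟨0, 0, by norm_num, by nlinarith [sq_nonneg A, sq_nonneg B], by nlinarith [sq_nonneg A, sq_nonneg B]⟩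
  · refine ⟨A / t, B / t, ?_, by field_simp, by field_simp⟩
    rw [div_pow, div_pow, ← add_div, div_le_one (by positivity)]
    exact h

/-- for the m pure states φ_x = (cos(πx/m), sin(πx/m))ᵀ uniformly
distributed on the Bloch equatorial plane, the set of correlation vectors
p_x = Tr[ρ_x π₀] over all two-outcome POVMs equals the convex hull of {0, u} and
the ellipse E = { p : p_x = ½ + ½(a cos(2πx/m) + b sin(2πx/m)), a² + b² ≤ 1 }. -/
theorem stmt15 (m : ℕ) (hm : 3 ≤ m)
    (φ : Fin m → Fin 2 → ℂ)
    (hφ : ∀ x, φ x = ![(Real.cos (Real.pi * x / m) : ℂ), (Real.sin (Real.pi * x / m) : ℂ)])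
    (ρ : Fin m → Matrix (Fin 2) (Fin 2) ℂ)
    (hρ : ∀ x, ρ x = Matrix.vecMulVec (φ x) (star (φ x)))
    (u : Fin m → ℝ) (hu : u = fun _ => 1) :
    {p : Fin m → ℝ | ∃ π₀ π₁ : Matrix (Fin 2) (Fin 2) ℂ,
        π₀.PosSemidef ∧ π₁.PosSemidef ∧ π₀ + π₁ = 1 ∧
        ∀ x, p x = ((ρ x * π₀).trace).re} =
      convexHull ℝ
        ({0, u} ∪ {p : Fin m → ℝ | ∃ a b : ℝ, a ^ 2 + b ^ 2 ≤ 1 ∧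
          ∀ x, p x = 1 / 2 +
            (a * Real.cos (2 * Real.pi * x / m) + b * Real.sin (2 * Real.pi * x / m)) / 2}) := by
  have harg : ∀ x : Fin m, 2 * Real.pi * x / m = 2 * (Real.pi * x / m) := fun x => by ring
  simp only [hρ, hφ, harg]
  apply Set.Subset.antisymm
  · rintro p ⟨P, Q, hP, hQ, hPQ, hp⟩
    simp only [aux_trace _ P hP.1] at hp
    obtain ⟨hP0, hP1⟩ := aux_bound P hP
    obtain ⟨hQ0, hQ1⟩ := aux_bound Q hQ
    have hQe : Q = 1 - P := by rw [← hPQ]; simp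
    have e00 : (Q 0 0).re = 1 - (P 0 0).re := by simp [hQe]
    have e11 : (Q 1 1).re = 1 - (P 1 1).re := by simp [hQe]
    have e01 : (Q 0 1).re = - (P 0 1).re := by simp [hQe]
    rw [e00, e11] at hQ0
    rw [e00, e11, e01] at hQ1
    generalize (P 0 0).re = α at *
    generalize (P 1 1).re = δ at *
    generalize (P 0 1).re = β at *
    have hconv := convex_convexHull ℝ ({0, u} ∪ {p : Fin m → ℝ | ∃ a b : ℝ, a ^ 2 + b ^ 2 ≤ 1 ∧
          ∀ x : Fin m, p x = 1 / 2 +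
            (a * Real.cos (2 * (Real.pi * x / m)) + b * Real.sin (2 * (Real.pi * x / m))) / 2})
    have hsub := subset_convexHull ℝ ({0, u} ∪ {p : Fin m → ℝ | ∃ a b : ℝ, a ^ 2 + b ^ 2 ≤ 1 ∧
          ∀ x : Fin m, p x = 1 / 2 +
            (a * Real.cos (2 * (Real.pi * x / m)) + b * Real.sin (2 * (Real.pi * x / m))) / 2})
    rcases le_total ((α + δ) / 2) (1 / 2) with ht | ht
    · obtain ⟨a, b, hab, ha, hb⟩ := aux_div ((α - δ) / 2) β ((α + δ) / 2) (by linarith) hP1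
      have := hconv (hsub (Or.inl (Or.inl rfl))) (hsub (Or.inr ⟨a, b, hab, fun x => rfl⟩))
        (a := 1 - (α + δ)) (b := α + δ) (by linarith) (by linarith) (by ring)
      convert this using 1
      ext x
      simp only [hp x, ha, hb, Pi.add_apply, Pi.smul_apply, smul_eq_mul, Pi.zero_apply]
      ring
    · obtain ⟨a, b, hab, ha, hb⟩ := aux_div ((α - δ) / 2) β (1 - (α + δ) / 2) (by linarith)
        (by nlinarith)
      have := hconv (hsub (Or.inl (Or.inr rfl))) (hsub (Or.inr ⟨a, b, hab, fun x => rfl⟩))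
        (a := (α + δ) - 1) (b := 2 - (α + δ)) (by linarith) (by linarith) (by ring)
      convert this using 1
      ext x
      simp only [hp x, ha, hb, hu, Pi.add_apply, Pi.smul_apply, smul_eq_mul]
      ring
  · apply convexHull_min
    · rintro p ((rfl | rfl) | ⟨a, b, hab, hp⟩)
      · exact ⟨0, 1, Matrix.PosSemidef.zero, Matrix.PosSemidef.one, by simp, fun x => by rw [Matrix.mul_zero]; simp⟩
      · refine ⟨1, 0, Matrix.PosSemidef.one, Matrix.PosSemidef.zero, by simp, fun x => ?_⟩
        rw [aux_trace _ 1 Matrix.isHermitian_one, hu]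
        simp
      · have h1 := aux_psd a b hab
        have h2 := aux_psd (-a) (-b) (by simpa using hab)
        refine ⟨_, _, h1, h2, ?_, fun x => ?_⟩
        · ext i j
          fin_cases i <;> fin_cases j <;> simp <;> ring
        · rw [aux_trace _ _ h1.1, hp x]
          simp only [Matrix.of_apply, Matrix.cons_val', Matrix.cons_val_zero, Matrix.cons_val_one,
            Matrix.cons_val_fin_one, Complex.ofReal_re]
          ring
    · rintro p ⟨P, P', hP, hP', hPP, hp⟩ q ⟨Q, Q', hQ, hQ', hQQ, hq⟩ s t hs ht hst
      have hs' : (0:ℂ) ≤ (s : ℂ) := by exact_mod_cast hs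
      have ht' : (0:ℂ) ≤ (t : ℂ) := by exact_mod_cast ht
      refine ⟨(s:ℂ) • P + (t:ℂ) • Q, (s:ℂ) • P' + (t:ℂ) • Q', (hP.smul hs').add (hQ.smul ht'),
        (hP'.smul hs').add (hQ'.smul ht'), ?_, fun x => ?_⟩
      · have : (s:ℂ) • P + (t:ℂ) • Q + ((s:ℂ) • P' + (t:ℂ) • Q') =
            (s:ℂ) • (P + P') + (t:ℂ) • (Q + Q') := by
          simp only [smul_add]; abel
        rw [this, hPP, hQQ, ← add_smul]
        have : (s:ℂ) + t = 1 := by exact_mod_cast hst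
        rw [this, one_smul]
      · simp only [Pi.add_apply, Pi.smul_apply, smul_eq_mul, hp x, hq x, Matrix.mul_add,
          Matrix.mul_smul, Matrix.trace_add, Matrix.trace_smul, Complex.add_re,
          Complex.re_ofReal_mul]
end
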